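/- Let g = sp_n(R) be the real symplectic Lie algebra acting on I = R^{2n} by the standard representation. Then the algebra of invariants [Λ*(R^{2n})]^{sp_n(R)} equals the exterior subalgebra generated by the symplectic form ω_n = Σ_{i=1}^n (∂/∂x^i) ∧ (∂/∂y^i), i.e., it has basis {1, ω_n, ω_n², ..., ω_nⁿ} (powers taken in Λ*(R^{2n})). -/

import Mathlib

open ExteriorAlgebra

namespace SpInv
noncomputable section

abbrev V (n : ℕ) := (Fin n ⊕ Fin n) → ℝ
abbrev A (n : ℕ) := ExteriorAlgebra ℝ (V n)

variable {n : ℕ}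

def e (i : Fin n) : A n := ExteriorAlgebra.ι ℝ (Pi.single (Sum.inl i) 1 : V n)
def f (i : Fin n) : A n := ExteriorAlgebra.ι ℝ (Pi.single (Sum.inr i) 1 : V n)

lemma anti (v w : V n) : ι ℝ v * ι ℝ w = - (ι ℝ w * ι ℝ v) :=
  eq_neg_of_add_eq_zero_left (ι_add_mul_swap v w)

lemma anti' (v w : V n) (x : A n) : ι ℝ v * (ι ℝ w * x) = - (ι ℝ w * (ι ℝ v * x)) := by
  rw [← mul_assoc, anti, neg_mul, mul_assoc]

lemma sq' (v : V n) (x : A n) : ι ℝ v * (ι ℝ v * x) = 0 := by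
  rw [← mul_assoc, ι_sq_zero, zero_mul]

lemma central (v w : V n) (x : A n) : x * (ι ℝ v * ι ℝ w) = (ι ℝ v * ι ℝ w) * x := by
  induction x using ExteriorAlgebra.induction with
  | algebraMap r => exact Algebra.commutes r _
  | ι z => rw [mul_assoc, anti w z, mul_neg, ← mul_assoc, ← mul_assoc, anti z v, neg_mul]
  | mul a b ha hb => rw [mul_assoc, hb, ← mul_assoc, ha, mul_assoc]
  | add a b ha hb => rw [add_mul, mul_add, ha, hb]

def u (i : Fin n) : Subalgebra.center ℝ (A n) :=
  ⟨e i * f i, Subalgebra.mem_center_iff.2 fun b => central _ _ b⟩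

def U (S : Finset (Fin n)) : A n := ((∏ i ∈ S, u i : Subalgebra.center ℝ (A n)) : A n)

lemma U_comm (S : Finset (Fin n)) (x : A n) : x * U S = U S * x :=
  Subalgebra.mem_center_iff.1 (∏ i ∈ S, u i : Subalgebra.center ℝ (A n)).2 x

lemma U_empty : U (∅ : Finset (Fin n)) = 1 := by simp [U]

lemma U_insert {i : Fin n} {S : Finset (Fin n)} (h : i ∉ S) :
    U (insert i S) = e i * f i * U S := by
  simp [U, Finset.prod_insert h, u]

lemma u_sq (i : Fin n) : u i * u i = 0 := by
  apply Subtype.ext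
  change e i * f i * (e i * f i) = 0
  unfold e f
  rw [mul_assoc, anti', sq', mul_zero, neg_zero]

lemma U_mem {i : Fin n} {S : Finset (Fin n)} (h : i ∈ S) : e i * f i * U S = 0 := by
  have : u i * ∏ i ∈ S, u i = 0 := by
    rw [← Finset.mul_prod_erase _ _ h, ← mul_assoc, u_sq, zero_mul]
  exact congrArg Subtype.val this

lemma U_mul_disj {S T : Finset (Fin n)} (h : Disjoint S T) : U S * U T = U (S ∪ T) := by
  simp [U, Finset.prod_union h]

lemma U_mul_not {S T : Finset (Fin n)} (h : ¬ Disjoint S T) : U S * U T = 0 := by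
  rw [Finset.not_disjoint_iff] at h
  obtain ⟨i, hi, hj⟩ := h
  have := U_insert (Finset.notMem_erase i S)
  rw [Finset.insert_erase hi] at this
  rw [this, mul_assoc, U_comm T, ← mul_assoc, U_mem hj, zero_mul]

/-- contraction -/
def con (k : Fin n ⊕ Fin n) : A n →ₗ[ℝ] A n :=
  CliffordAlgebra.contractLeft (Q := (0 : QuadraticForm ℝ (V n))) (LinearMap.proj k)

lemma con_ι_mul (k : Fin n ⊕ Fin n) (v : V n) (x : A n) :
    con k (ι ℝ v * x) = v k • x - ι ℝ v * con k x :=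
  CliffordAlgebra.contractLeft_ι_mul _ _ _

lemma con_one (k : Fin n ⊕ Fin n) : con k (1 : A n) = 0 :=
  CliffordAlgebra.contractLeft_one (Q := (0 : QuadraticForm ℝ (V n))) _

lemma con_U_inl {i : Fin n} {S : Finset (Fin n)} (h : i ∉ S) : con (Sum.inl i) (U S) = 0 := by
  induction S using Finset.induction_on with
  | empty => rw [U_empty, con_one]
  | insert j S hj ih =>
    simp only [Finset.mem_insert, not_or] at h
    rw [U_insert hj, e, f, mul_assoc, con_ι_mul, con_ι_mul, ih h.2]
    simp [h.1]

lemma con_U_inr {i : Fin n} {S : Finset (Fin n)} (h : i ∉ S) : con (Sum.inr i) (U S) = 0 := by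
  induction S using Finset.induction_on with
  | empty => rw [U_empty, con_one]
  | insert j S hj ih =>
    simp only [Finset.mem_insert, not_or] at h
    rw [U_insert hj, e, f, mul_assoc, con_ι_mul, con_ι_mul, ih h.2]
    simp [h.1]

lemma U_ne_zero (S : Finset (Fin n)) : U S ≠ 0 := by
  induction S using Finset.induction_on with
  | empty => rw [U_empty]; exact one_ne_zero
  | insert j S hj ih =>
    intro h
    apply ih
    have h2 : con (Sum.inr j) (con (Sum.inl j) (U (insert j S))) = 0 := by simp [h]
    rw [U_insert hj, e, f, mul_assoc, con_ι_mul, con_ι_mul, con_U_inl hj] at h2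
    simp only [Pi.single_eq_same, one_smul, mul_zero, sub_zero, ne_eq, reduceCtorEq,
      not_false_eq_true, Pi.single_eq_of_ne, zero_smul] at h2
    rw [con_ι_mul, con_U_inr hj] at h2
    simpa using h2

lemma U_indep (c : Finset (Fin n) → ℝ) (h : ∑ S, c S • U S = 0) (S : Finset (Fin n)) :
    c S = 0 := by
  induction S using Finset.strongInduction with
  | H S ih =>
    have h2 : (∑ T, c T • U T) * U Sᶜ = 0 := by rw [h, zero_mul]
    rw [Finset.sum_mul, Finset.sum_eq_single S] at h2
    · rw [smul_mul_assoc, U_mul_disj disjoint_compl_right] at h2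
      exact (smul_eq_zero.1 h2).resolve_right (U_ne_zero _)
    · intro T _ hT
      by_cases hd : Disjoint T Sᶜ
      · have hs : T ⊆ S := by
          rwa [disjoint_compl_right_iff] at hd
        rw [ih T (hs.ssubset_of_ne hT), zero_smul, zero_mul]
      · rw [smul_mul_assoc, U_mul_not hd, smul_zero]
    · simp

lemma U_li : LinearIndependent ℝ (U : Finset (Fin n) → A n) :=
  Fintype.linearIndependent_iff.2 U_indep

/-- elementary symmetric -/
def E (p : ℕ) : A n := ∑ S ∈ Finset.univ.filter (fun S : Finset (Fin n) => S.card = p), U S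

def om : A n := ∑ i : Fin n, e i * f i

lemma om_mul_E (p : ℕ) : om * E p = ((p + 1 : ℕ) : ℝ) • (E (p + 1) : A n) := by
  unfold om E
  rw [Finset.sum_mul_sum, Finset.smul_sum]
  have h1 : ∀ S ∈ Finset.univ.filter (fun S : Finset (Fin n) => S.card = p + 1),
      ((p + 1 : ℕ) : ℝ) • U S = ∑ i ∈ S, U S := by
    intro S hS
    rw [Finset.sum_const, (Finset.mem_filter.1 hS).2, Nat.cast_smul_eq_nsmul]
  rw [Finset.sum_congr rfl h1, Finset.sum_sigma', Finset.sum_sigma']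
  rw [← Finset.sum_filter_of_ne (p := fun x : (Σ _ : Fin n, Finset (Fin n)) => x.1 ∉ x.2)]
  · refine Finset.sum_bij' (fun x _ => ⟨insert x.1 x.2, x.1⟩) (fun x _ => ⟨x.2, x.1.erase x.2⟩)
      ?_ ?_ ?_ ?_ ?_
    · rintro ⟨i, S⟩ h
      simp at h ⊢
      rw [Finset.card_insert_of_notMem h.2, h.1]
    · rintro ⟨S, i⟩ h
      simp at h ⊢
      rw [Finset.card_erase_of_mem h.2, h.1]; rfl
    · rintro ⟨i, S⟩ h
      simp at h ⊢
      exact h.2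
    · rintro ⟨S, i⟩ h
      simp at h ⊢
      exact Finset.insert_erase h.2
    · rintro ⟨i, S⟩ h
      simp at h ⊢
      rw [U_insert h.2]
  · rintro ⟨i, S⟩ _ h hi
    exact h (U_mem hi)

lemma om_pow (p : ℕ) : (om : A n) ^ p = (p.factorial : ℝ) • E p := by
  induction p with
  | zero =>
    have : (Finset.univ.filter (fun S : Finset (Fin n) => S.card = 0)) = {∅} := by
      ext S; simp
    rw [E, this, Finset.sum_singleton, U_empty]; simp
  | succ p ih =>
    rw [pow_succ', ih, mul_smul_comm, om_mul_E, smul_smul, Nat.factorial_succ]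
    push_cast
    rw [mul_comm]

lemma sum_E (b : Fin (n+1) → ℝ) : ∑ p : Fin (n+1), b p • (E (p : ℕ) : A n) =
    ∑ S : Finset (Fin n), b ⟨S.card, Nat.lt_succ_of_le (by simpa using S.card_le_univ)⟩ • U S := by
  unfold E
  simp_rw [Finset.smul_sum, Finset.sum_filter]
  rw [Finset.sum_comm]
  refine Finset.sum_congr rfl fun S _ => ?_
  rw [Finset.sum_eq_single (⟨S.card, Nat.lt_succ_of_le (by simpa using S.card_le_univ)⟩ : Fin (n+1))]
  · simp
  · intro p _ hp
    rw [if_neg]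
    rintro h
    exact hp (Fin.ext h.symm)
  · simp

lemma pow_li : LinearIndependent ℝ (fun p : Fin (n+1) => (om : A n) ^ (p : ℕ)) := by
  rw [Fintype.linearIndependent_iff]
  intro g hg p
  simp_rw [om_pow, smul_smul] at hg
  rw [sum_E (fun p => g p * ((p : ℕ).factorial : ℝ))] at hg
  obtain ⟨S, hS⟩ := Finset.exists_subset_card_eq (s := (Finset.univ : Finset (Fin n))) (n := p)
    (by simpa using Nat.lt_succ_iff.1 p.2)
  have := U_indep _ hg S
  simp only [hS.2, Fin.eta] at this
  exact (mul_eq_zero.1 this).resolve_right (by positivity)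


/-! part two -/

structure Der (δ : Fin n → Fin n → A n →ₗ[ℝ] A n) : Prop where
  mul : ∀ i j a b, δ i j (a * b) = δ i j a * b + a * δ i j b
  he : ∀ i j k, δ i j (e k) = if k = i then e j else 0
  hf : ∀ i j k, δ i j (f k) = if k = j then - f i else 0

variable {δ : Fin n → Fin n → A n →ₗ[ℝ] A n}

lemma der_one (d : A n →ₗ[ℝ] A n) (h : ∀ a b, d (a * b) = d a * b + a * d b) : d 1 = 0 := by
  have := h 1 1
  simpa using this

lemma Der.one (h : Der δ) (i j : Fin n) : δ i j 1 = 0 := der_one _ (h.mul i j)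

lemma Der.u_self (h : Der δ) (i j : Fin n) : δ i i (e j * f j) = 0 := by
  rw [h.mul, h.he, h.hf]
  split_ifs with hj
  · subst hj; simp
  · simp

lemma Der.u_other (h : Der δ) {i j k : Fin n} (hi : k ≠ i) (hj : k ≠ j) :
    δ i j (e k * f k) = 0 := by
  rw [h.mul, h.he, h.hf, if_neg hi, if_neg hj]; simp

lemma Der.U_other (h : Der δ) {i j : Fin n} {S : Finset (Fin n)} (hi : i ∉ S) (hj : j ∉ S) :
    δ i j (U S) = 0 := by
  induction S using Finset.induction_on with
  | empty => rw [U_empty, h.one]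
  | insert k S hk ih =>
    simp only [Finset.mem_insert, not_or] at hi hj
    rw [U_insert hk, h.mul, h.u_other (Ne.symm hi.1) (Ne.symm hj.1), ih hi.2 hj.2]
    simp

/-- monomial span over a list -/
def M : List (Fin n) → Submodule ℝ (A n)
  | [] => Submodule.span ℝ {1}
  | i :: L => M L ⊔ (M L).map (LinearMap.mulLeft ℝ (e i)) ⊔ (M L).map (LinearMap.mulLeft ℝ (f i))
      ⊔ (M L).map (LinearMap.mulLeft ℝ (e i * f i))

lemma mem_M_cons {i : Fin n} {L : List (Fin n)} {x : A n} : x ∈ M (i :: L) ↔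
    ∃ a ∈ M L, ∃ b ∈ M L, ∃ c ∈ M L, ∃ d ∈ M L, x = a + e i * b + f i * c + e i * f i * d := by
  simp only [M, Submodule.mem_sup, Submodule.mem_map, LinearMap.mulLeft_apply]
  constructor
  · rintro ⟨_, ⟨_, ⟨a, ha, _, ⟨b, hb, rfl⟩, rfl⟩, _, ⟨c, hc, rfl⟩, rfl⟩, _, ⟨d, hd, rfl⟩, rfl⟩
    exact ⟨a, ha, b, hb, c, hc, d, hd, rfl⟩
  · rintro ⟨a, ha, b, hb, c, hc, d, hd, rfl⟩
    exact ⟨_, ⟨_, ⟨a, ha, _, ⟨b, hb, rfl⟩, rfl⟩, _, ⟨c, hc, rfl⟩, rfl⟩, _, ⟨d, hd, rfl⟩, rfl⟩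

lemma gen_mul_aux (i : Fin n) (v : V n) (a b c d : A n) :
    ι ℝ v * (a + e i * b + f i * c + e i * f i * d) =
    ι ℝ v * a + e i * (- (ι ℝ v * b)) + f i * (- (ι ℝ v * c)) + e i * f i * (ι ℝ v * d) := by
  have h1 : ι ℝ v * (e i * b) = - (e i * (ι ℝ v * b)) := anti' _ _ _
  have h2 : ι ℝ v * (f i * c) = - (f i * (ι ℝ v * c)) := anti' _ _ _
  have h3 : ι ℝ v * (e i * f i * d) = e i * f i * (ι ℝ v * d) := by
    have hc : ι ℝ v * (e i * f i) = e i * f i * ι ℝ v := central _ _ _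
    rw [← mul_assoc, hc, mul_assoc]
  rw [mul_add, mul_add, mul_add, h1, h2, h3, mul_neg, mul_neg]

lemma M_mul (L : List (Fin n)) (j : Fin n) (hj : j ∈ L) (x : A n) (hx : x ∈ M L) :
    e j * x ∈ M L ∧ f j * x ∈ M L := by
  induction L generalizing x with
  | nil => simp at hj
  | cons i L ih =>
    rw [mem_M_cons] at hx
    obtain ⟨a, ha, b, hb, c, hc, d, hd, rfl⟩ := hx
    rw [mem_M_cons, mem_M_cons]
    by_cases hL : j ∈ L
    · refine ⟨⟨_, (ih hL a ha).1, _, neg_mem (ih hL b hb).1, _, neg_mem (ih hL c hc).1, _,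
        (ih hL d hd).1, gen_mul_aux _ _ _ _ _ _⟩, ⟨_, (ih hL a ha).2, _, neg_mem (ih hL b hb).2, _,
        neg_mem (ih hL c hc).2, _, (ih hL d hd).2, gen_mul_aux _ _ _ _ _ _⟩⟩
    · have hji : j = i := by simpa [hL] using hj
      subst hji
      refine ⟨⟨0, zero_mem _, a, ha, 0, zero_mem _, c, hc, ?_⟩,
        ⟨0, zero_mem _, 0, zero_mem _, a, ha, -b, neg_mem hb, ?_⟩⟩
      · simp only [e, f, mul_add, mul_assoc, sq']; simp
      · simp only [e, f, mul_add, mul_assoc, sq',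
          anti' (Pi.single (Sum.inr j) 1) (Pi.single (Sum.inl j) 1)]; simp

lemma one_mem_M (L : List (Fin n)) : (1 : A n) ∈ M L := by
  induction L with
  | nil => exact Submodule.subset_span rfl
  | cons i L ih => exact mem_M_cons.2 ⟨1, ih, 0, zero_mem _, 0, zero_mem _, 0, zero_mem _, by simp⟩

lemma M_top (L : List (Fin n)) (hL : ∀ i, i ∈ L) (x : A n) : x ∈ M L := by
  refine CliffordAlgebra.left_induction (Q := (0 : QuadraticForm ℝ (V n)))
    (P := fun x => x ∈ M L) ?_ ?_ ?_ x
  · intro r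
    rw [Algebra.algebraMap_eq_smul_one]
    exact Submodule.smul_mem _ _ (one_mem_M L)
  · intro x y hx hy
    exact add_mem hx hy
  · intro x v hx
    change ι ℝ v * x ∈ M L
    have hv : v = ∑ k, v k • (Pi.single k 1 : V n) := pi_eq_sum_univ' v
    rw [hv, map_sum, Finset.sum_mul]
    refine sum_mem fun k _ => ?_
    rw [map_smul, smul_mul_assoc]
    refine Submodule.smul_mem _ _ ?_
    rcases k with k | k
    · exact (M_mul L k (hL k) x hx).1
    · exact (M_mul L k (hL k) x hx).2

lemma Der.M_kill (h : Der δ) (i : Fin n) (L : List (Fin n)) (hi : i ∉ L) (x : A n) (hx : x ∈ M L) :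
    δ i i x = 0 := by
  induction L generalizing x with
  | nil =>
    obtain ⟨r, rfl⟩ := Submodule.mem_span_singleton.1 hx
    rw [map_smul, h.one, smul_zero]
  | cons j L ih =>
    simp only [List.mem_cons, not_or] at hi
    obtain ⟨a, ha, b, hb, c, hc, d, hd, rfl⟩ := mem_M_cons.1 hx
    have ih := ih hi.2
    simp only [map_add, h.mul, ih _ ha, ih _ hb, ih _ hc, ih _ hd, h.he, h.hf, if_neg (Ne.symm hi.1)]
    simp

def Q (δ : Fin n → Fin n → A n →ₗ[ℝ] A n) : List (Fin n) → A n →ₗ[ℝ] A n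
  | [] => LinearMap.id
  | i :: L => Q δ L ∘ₗ (LinearMap.id - δ i i ∘ₗ δ i i)

lemma Der.u_mul (h : Der δ) (i j : Fin n) (x : A n) :
    δ i i (e j * f j * x) = e j * f j * δ i i x := by
  rw [h.mul, h.u_self, zero_mul, zero_add]

lemma Der.Q_u (h : Der δ) (L : List (Fin n)) (j : Fin n) (x : A n) :
    Q δ L (e j * f j * x) = e j * f j * Q δ L x := by
  induction L generalizing x with
  | nil => rfl
  | cons i L ih =>
    simp only [Q, LinearMap.comp_apply, LinearMap.sub_apply, LinearMap.id_apply, h.u_mul]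
    rw [← mul_sub, ih]

def W (n : ℕ) : Submodule ℝ (A n) := Submodule.span ℝ (Set.range U)

lemma W_u (j : Fin n) (x : A n) (hx : x ∈ W n) : e j * f j * x ∈ W n := by
  induction hx using Submodule.span_induction with
  | mem x hx =>
    obtain ⟨S, rfl⟩ := hx
    by_cases hj : j ∈ S
    · rw [U_mem hj]; exact zero_mem _
    · rw [← U_insert hj]; exact Submodule.subset_span ⟨_, rfl⟩
  | zero => rw [mul_zero]; exact zero_mem _
  | add x y _ _ hx hy => rw [mul_add]; exact add_mem hx hy
  | smul r x _ hx => rw [mul_smul_comm]; exact Submodule.smul_mem _ _ hx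

lemma Der.Q_mem (h : Der δ) (L : List (Fin n)) (hL : L.Nodup) (x : A n) (hx : x ∈ M L) :
    Q δ L x ∈ W n := by
  induction L generalizing x with
  | nil =>
    obtain ⟨r, rfl⟩ := Submodule.mem_span_singleton.1 hx
    exact Submodule.smul_mem _ _ (Submodule.subset_span ⟨∅, U_empty⟩)
  | cons i L ih =>
    obtain ⟨hi, hL⟩ := List.nodup_cons.1 hL
    obtain ⟨a, ha, b, hb, c, hc, d, hd, rfl⟩ := mem_M_cons.1 hx
    have hk := h.M_kill i L hi
    have : (LinearMap.id - δ i i ∘ₗ δ i i : A n →ₗ[ℝ] A n) (a + e i * b + f i * c + e i * f i * d)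
        = a + e i * f i * d := by
      simp only [LinearMap.comp_apply, LinearMap.sub_apply, LinearMap.id_apply, map_add, h.u_mul]
      simp only [h.mul, hk _ ha, hk _ hb, hk _ hc, hk _ hd, h.he, h.hf, if_true]
      simp only [mul_zero, add_zero, map_zero, neg_mul, map_neg, h.mul, hk _ hb, hk _ hc, h.he, h.hf, if_true]
      simp
    rw [Q, LinearMap.comp_apply, this, map_add, h.Q_u]
    exact add_mem (ih hL a ha) (W_u _ _ (ih hL d hd))

lemma Der.mem_W (h : Der δ) (a : A n) (ha : ∀ i, δ i i a = 0) : a ∈ W n := by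
  have h1 := h.Q_mem (List.finRange n) (List.nodup_finRange n) a (M_top _ List.mem_finRange a)
  have h2 : ∀ L, Q δ L a = a := by
    intro L
    induction L with
    | nil => rfl
    | cons i L ih => simp [Q, ha, ih]
  rwa [h2] at h1

/-- transfer operator -/
lemma Der.G_i (h : Der δ) {i j : Fin n} (hij : i ≠ j) {T : Finset (Fin n)} (hi : i ∉ T) (hj : j ∉ T) :
    δ i j (U (insert i T)) = e j * f i * U T := by
  rw [U_insert hi, h.mul, h.U_other hi hj, h.mul, h.he, h.hf, if_pos rfl, if_neg hij]
  simp

lemma Der.G_j (h : Der δ) {i j : Fin n} (hij : i ≠ j) {T : Finset (Fin n)} (hi : i ∉ T) (hj : j ∉ T) :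
    δ i j (U (insert j T)) = - (e j * f i * U T) := by
  rw [U_insert hj, h.mul, h.U_other hi hj, h.mul, h.he, h.hf, if_pos rfl, if_neg hij.symm]
  simp

lemma Der.G_ij (h : Der δ) {i j : Fin n} (hij : i ≠ j) {T : Finset (Fin n)} (hi : i ∉ T) (hj : j ∉ T) :
    δ i j (U (insert i (insert j T))) = 0 := by
  rw [U_insert (by simp [hij, hi]), h.mul, h.G_j hij hi hj, h.mul, h.he, h.hf, if_pos rfl,
    if_neg hij, U_insert hj]
  have h1 : e j * f i * (e j * f j * U T) = 0 := by
    simp only [e, f, mul_assoc, sq', anti' (Pi.single (Sum.inr i) 1) (Pi.single (Sum.inl j) 1)]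
    simp [sq']
  have h2 : e i * f i * (e j * f i * U T) = 0 := by
    simp only [e, f, mul_assoc, sq', anti' (Pi.single (Sum.inr i) 1) (Pi.single (Sum.inl j) 1)]
    simp [sq']
  simp [h1, h2]

lemma switch (i j : Fin n) (x : A n) : e j * f i * x * (e i * f j) = - (e i * f i * (e j * f j * x)) := by
  have h1 : x * (e i * f j) = e i * f j * x := central _ _ _
  rw [mul_assoc, h1]
  have h2 : e j * f i * (e i * f j * x) = - (e j * (e i * f i * (f j * x))) := by
    have : f i * (e i * (f j * x)) = - (e i * (f i * (f j * x))) := anti' _ _ _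
    simp only [mul_assoc, this, mul_neg]
  have h3 : e j * (e i * f i) = e i * f i * e j := central _ _ _
  rw [h2, ← mul_assoc (e j), h3]
  simp only [mul_assoc]

lemma Der.G_eq (h : Der δ) {i j : Fin n} (hij : i ≠ j) (S : Finset (Fin n)) :
    δ i j (U S) * (e i * f j) =
      ((if j ∈ S ∧ i ∉ S then 1 else 0) - (if i ∈ S ∧ j ∉ S then 1 else 0) : ℝ) •
        U (insert i (insert j S)) := by
  by_cases hi : i ∈ S <;> by_cases hj : j ∈ S
  · obtain ⟨T, hiT, hjT, rfl⟩ : ∃ T : Finset (Fin n), i ∉ T ∧ j ∉ T ∧ S = insert i (insert j T) := by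
      refine ⟨(S.erase i).erase j, by simp, by simp, ?_⟩
      ext k; simp; grind
    rw [h.G_ij hij hiT hjT]; simp
  · obtain ⟨T, hiT, rfl⟩ : ∃ T : Finset (Fin n), i ∉ T ∧ S = insert i T :=
      ⟨S.erase i, by simp, (Finset.insert_erase hi).symm⟩
    have hjT : j ∉ T := fun h => hj (by simp [h])
    rw [h.G_i hij hiT hjT, switch, ← U_insert hjT, ← U_insert (by simp [hij, hiT])]
    simp [hj, Finset.insert_comm j i]
  · obtain ⟨T, hjT, rfl⟩ : ∃ T : Finset (Fin n), j ∉ T ∧ S = insert j T :=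
      ⟨S.erase j, by simp, (Finset.insert_erase hj).symm⟩
    have hiT : i ∉ T := fun h => hi (by simp [h])
    rw [h.G_j hij hiT hjT, neg_mul, switch, ← U_insert hjT, ← U_insert (by simp [hij, hiT])]
    simp [hi]
  · rw [h.U_other hi hj]; simp [hi, hj]

lemma coord (R : Finset (Fin n)) : ∃ φ : A n →ₗ[ℝ] ℝ, ∀ S, φ (U S) = if S = R then 1 else 0 := by
  obtain ⟨φ, hφ⟩ := LinearMap.exists_extend
    ((Finsupp.lapply R : (Finset (Fin n) →₀ ℝ) →ₗ[ℝ] ℝ) ∘ₗ (U_li (n := n)).repr)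
  refine ⟨φ, fun S => ?_⟩
  have := LinearMap.congr_fun hφ ⟨U S, Submodule.subset_span ⟨S, rfl⟩⟩
  simp only [LinearMap.comp_apply, Submodule.subtype_apply] at this
  rw [this]
  have h2 : (U_li (n := n)).repr ⟨U S, Submodule.subset_span ⟨S, rfl⟩⟩ = Finsupp.single S 1 :=
    (U_li (n := n)).repr_eq_single S _ rfl
  simp [h2, Finsupp.single_apply]

lemma Der.coef (h : Der δ) (c : Finset (Fin n) → ℝ) {i j : Fin n} (hij : i ≠ j)
    (ha : δ i j (∑ S, c S • U S) = 0) {T : Finset (Fin n)} (hi : i ∉ T) (hj : j ∉ T) :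
    c (insert i T) = c (insert j T) := by
  obtain ⟨φ, hφ⟩ := coord (insert i (insert j T))
  have h0 : φ (δ i j (∑ S, c S • U S) * (e i * f j)) = 0 := by rw [ha]; simp
  simp only [map_sum, map_smul, Finset.sum_mul, smul_mul_assoc, h.G_eq hij, hφ] at h0
  rw [Finset.sum_eq_add (insert i T) (insert j T)] at h0
  · have e1 : insert j (insert i T) = insert i (insert j T) := Finset.insert_comm _ _ _
    simp [hi, hj, hij, hij.symm, e1] at h0
    linarith
  · intro hh
    have : i ∈ insert j T := hh ▸ Finset.mem_insert_self i T
    simp [hij, hi] at this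
  · rintro S - ⟨h1, h2⟩
    by_cases hS : insert i (insert j S) = insert i (insert j T)
    · have key : ∀ k, k ≠ i → k ≠ j → (k ∈ S ↔ k ∈ T) := by
        intro k hk1 hk2
        have := Finset.ext_iff.1 hS k
        simpa [hk1, hk2] using this
      by_cases hiS : i ∈ S <;> by_cases hjS : j ∈ S
      · simp [hiS, hjS]
      · exfalso; apply h1; ext k; have := key k; simp; grind
      · exfalso; apply h2; ext k; have := key k; simp; grind
      · simp [hiS, hjS]
    · simp [hS]
  · simp
  · simp

lemma card_dep (c : Finset (Fin n) → ℝ)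
    (hc : ∀ i j, i ≠ j → ∀ T : Finset (Fin n), i ∉ T → j ∉ T → c (insert i T) = c (insert j T)) :
    ∀ (m : ℕ) (S S' : Finset (Fin n)), S.card = S'.card → (S \ S').card = m → c S = c S' := by
  intro m
  induction m with
  | zero =>
    intro S S' h h0
    rw [Finset.card_eq_zero, Finset.sdiff_eq_empty_iff_subset] at h0
    rw [Finset.eq_of_subset_of_card_le h0 h.ge]
  | succ m ih =>
    intro S S' h h0
    have h1 : (S' \ S).card = m + 1 := by rw [← h0, Finset.card_sdiff_comm h]
    obtain ⟨i, hi⟩ := Finset.card_pos.1 (by omega : 0 < (S \ S').card)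
    obtain ⟨j, hj⟩ := Finset.card_pos.1 (by omega : 0 < (S' \ S).card)
    rw [Finset.mem_sdiff] at hi hj
    have hij : i ≠ j := by rintro rfl; exact hj.2 hi.1
    have hjn : j ∉ S.erase i := by simp [hj.2]
    have e1 := hc i j hij (S.erase i) (by simp) hjn
    rw [Finset.insert_erase hi.1] at e1
    rw [e1]
    apply ih
    · rw [Finset.card_insert_of_notMem hjn, Finset.card_erase_of_mem hi.1, ← h]
      have := Finset.card_pos.2 ⟨i, hi.1⟩
      omega
    · have : insert j (S.erase i) \ S' = (S \ S').erase i := by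
        ext k; simp; grind
      rw [this, Finset.card_erase_of_mem (by simp [hi]), h0]; rfl

lemma Der.main (h : Der δ) (a : A n) (ha : ∀ i j, δ i j a = 0) :
    a ∈ Submodule.span ℝ (Set.range fun p : Fin (n+1) => (om : A n) ^ (p : ℕ)) := by
  have hW := h.mem_W a (fun i => ha i i)
  obtain ⟨c, rfl⟩ := (Submodule.mem_span_range_iff_exists_fun ℝ).1 hW
  have hc := card_dep c (fun i j hij T hi hj => h.coef c hij (ha i j) hi hj)
  have hb : ∃ b : Fin (n+1) → ℝ, ∀ S : Finset (Fin n),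
      c S = b ⟨S.card, Nat.lt_succ_of_le (by simpa using S.card_le_univ)⟩ := by
    have : ∀ p : Fin (n+1), ∃ S : Finset (Fin n), S.card = p := by
      intro p
      obtain ⟨S, hS⟩ := Finset.exists_subset_card_eq (s := (Finset.univ : Finset (Fin n))) (n := p)
        (by simpa using Nat.lt_succ_iff.1 p.2)
      exact ⟨S, hS.2⟩
    choose g hg using this
    refine ⟨fun p => c (g p), fun S => hc _ _ _ ?_ rfl⟩
    rw [hg]
  obtain ⟨b, hb⟩ := hb
  simp_rw [hb]
  rw [← sum_E]
  refine sum_mem fun p _ => Submodule.smul_mem _ _ ?_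
  have : (E (p : ℕ) : A n) = ((p : ℕ).factorial : ℝ)⁻¹ • om ^ (p : ℕ) := by
    rw [om_pow, smul_smul, inv_mul_cancel₀ (by positivity), one_smul]
  rw [this]
  exact Submodule.smul_mem _ _ (Submodule.subset_span ⟨p, rfl⟩)

def Xm (i j : Fin n) : Matrix (Fin n ⊕ Fin n) (Fin n ⊕ Fin n) ℝ :=
  Matrix.fromBlocks (Matrix.single j i 1) 0 0 (-(Matrix.single i j 1))

lemma mem_sp_iff (A B C D : Matrix (Fin n) (Fin n) ℝ) :
    Matrix.fromBlocks A B C D ∈ LieAlgebra.Symplectic.sp (Fin n) ℝ ↔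
      C.transpose = C ∧ A.transpose = - D ∧ B.transpose = B := by
  rw [LieAlgebra.Symplectic.sp, mem_skewAdjointMatricesLieSubalgebra,
    mem_skewAdjointMatricesSubmodule, Matrix.IsSkewAdjoint, Matrix.IsAdjointPair, Matrix.J,
    Matrix.fromBlocks_transpose, Matrix.fromBlocks_neg, Matrix.fromBlocks_multiply,
    Matrix.fromBlocks_multiply, Matrix.fromBlocks_inj]
  simp only [Matrix.mul_zero, Matrix.mul_one, zero_add, add_zero, Matrix.mul_neg, Matrix.zero_mul,
    Matrix.neg_mul, Matrix.one_mul, neg_neg, neg_zero, zero_add, add_zero, neg_inj]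
  constructor
  · rintro ⟨h1, h2, h3, h4⟩
    exact ⟨h1, neg_eq_iff_eq_neg.1 h2, h4⟩
  · rintro ⟨h1, h2, h3⟩
    refine ⟨h1, neg_eq_iff_eq_neg.2 h2, ?_, h3⟩
    have := congrArg Matrix.transpose h2
    simp at this
    rw [this]; simp

lemma Xm_mem (i j : Fin n) : Xm i j ∈ LieAlgebra.Symplectic.sp (Fin n) ℝ := by
  rw [Xm, mem_sp_iff]
  simp

lemma Xm_inl (i j k : Fin n) : (Xm i j).mulVec (Pi.single (Sum.inl k) 1) =
    if k = i then (Pi.single (Sum.inl j) 1 : V n) else 0 := by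
  rw [Matrix.mulVec_single_one]
  ext (l | l) <;> by_cases h : k = i <;> simp [Xm, h, Matrix.single_apply, Pi.single_apply, eq_comm]
  exact fun _ h' => absurd h'.symm h

lemma Xm_inr (i j k : Fin n) : (Xm i j).mulVec (Pi.single (Sum.inr k) 1) =
    if k = j then -(Pi.single (Sum.inr i) 1 : V n) else 0 := by
  rw [Matrix.mulVec_single_one]
  ext (l | l) <;> by_cases h : k = j <;> simp [Xm, h, Matrix.single_apply, Pi.single_apply, eq_comm]
  exact fun _ h' => absurd h'.symm h

lemma sym_zero (C : Matrix (Fin n) (Fin n) ℝ) (hC : C.transpose = C) (g : Fin n → V n) :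
    ∑ i, ∑ k, C k i • (ι ℝ (g k) * ι ℝ (g i)) = 0 := by
  have h : ∑ i, ∑ k, C k i • (ι ℝ (g k) * ι ℝ (g i)) =
      - ∑ i, ∑ k, C k i • (ι ℝ (g k) * ι ℝ (g i)) := by
    conv_lhs => rw [Finset.sum_comm]
    rw [← Finset.sum_neg_distrib]
    refine Finset.sum_congr rfl fun i _ => ?_
    rw [← Finset.sum_neg_distrib]
    refine Finset.sum_congr rfl fun k _ => ?_
    rw [anti (g i) (g k), smul_neg, ← congrFun (congrFun hC k) i, Matrix.transpose_apply]
  have h2 : (2 : ℝ) • ∑ i, ∑ k, C k i • (ι ℝ (g k) * ι ℝ (g i)) = 0 := by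
    rw [two_smul]
    exact add_eq_zero_iff_eq_neg.2 h
  exact (smul_eq_zero.1 h2).resolve_left two_ne_zero

lemma om_inv (d : A n →ₗ[ℝ] A n) (hm : ∀ a b, d (a * b) = d a * b + a * d b)
    (X : Matrix (Fin n ⊕ Fin n) (Fin n ⊕ Fin n) ℝ) (hX : X ∈ LieAlgebra.Symplectic.sp (Fin n) ℝ)
    (hd : ∀ v, d (ι ℝ v) = ι ℝ (X.mulVec v)) : d om = 0 := by
  obtain ⟨a, b, c, D, rfl⟩ : ∃ a b c D, X = Matrix.fromBlocks a b c D :=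
    ⟨_, _, _, _, (Matrix.fromBlocks_toBlocks X).symm⟩
  obtain ⟨h1, h2, h3⟩ := (mem_sp_iff _ _ _ _).1 hX
  have hl : ∀ i, d (e i) = ∑ k, a k i • e k + ∑ k, c k i • f k := by
    intro i
    rw [e, hd, pi_eq_sum_univ' (Matrix.mulVec _ _), Fintype.sum_sum_type]
    simp [map_add, map_sum, e, f, Matrix.mulVec_single_one]
  have hr : ∀ i, d (f i) = ∑ k, b k i • e k + ∑ k, D k i • f k := by
    intro i
    rw [f, hd, pi_eq_sum_univ' (Matrix.mulVec _ _), Fintype.sum_sum_type]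
    simp [map_add, map_sum, e, f, Matrix.mulVec_single_one]
  have e1 : ∑ i, ∑ k, c k i • (f k * f i) = (0 : A n) := sym_zero c h1 _
  have e2 : ∑ i, ∑ k, b k i • (e i * e k) = (0 : A n) := by
    have := sym_zero b h3 (fun k => (Pi.single (Sum.inl k) 1 : V n))
    have h5 : ∀ i k : Fin n, e i * e k = -(e k * e i) := fun i k => anti _ _
    rw [← neg_eq_zero, ← this, ← Finset.sum_neg_distrib]
    refine Finset.sum_congr rfl fun i _ => ?_
    rw [← Finset.sum_neg_distrib]
    refine Finset.sum_congr rfl fun k _ => ?_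
    rw [h5, smul_neg, neg_neg]
    rfl
  have e3 : ∑ i, ∑ k, a k i • (e k * f i) + ∑ i, ∑ k, D k i • (e i * f k) = (0 : A n) := by
    rw [Finset.sum_comm, ← Finset.sum_add_distrib]
    refine Finset.sum_eq_zero fun i _ => ?_
    rw [← Finset.sum_add_distrib]
    refine Finset.sum_eq_zero fun k _ => ?_
    rw [← add_smul]
    have := congrFun (congrFun h2 k) i
    simp at this
    rw [this]; simp
  rw [om, map_sum]
  simp only [hm, hl, hr, add_mul, mul_add, Finset.sum_mul, Finset.mul_sum, smul_mul_assoc,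
    mul_smul_comm, Finset.sum_add_distrib, e1, e2]
  rw [add_zero, zero_add, e3]

lemma om_pow_inv (d : A n →ₗ[ℝ] A n) (hm : ∀ a b, d (a * b) = d a * b + a * d b)
    (h : d om = 0) (p : ℕ) : d (om ^ p) = 0 := by
  induction p with
  | zero => rw [pow_zero]; exact der_one d hm
  | succ p ih => rw [pow_succ, hm, ih, h]; simp

end
end SpInv



/-- for `g = sp_n(ℝ)` acting on `ℝ^{2n}` by the standard representation
(extended to the exterior algebra `Λ*(ℝ^{2n})` by derivations `θ`), the algebra of
invariants `[Λ*(ℝ^{2n})]^{sp_n(ℝ)}` equals the subalgebra generated by the symplectic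
form `ω_n = Σᵢ ∂/∂xⁱ ∧ ∂/∂yⁱ`, with basis `{1, ω_n, ω_n², ..., ω_nⁿ}`. -/
theorem sp_n_exterior_invariants
    (n : ℕ)
    (θ : Matrix (Fin n ⊕ Fin n) (Fin n ⊕ Fin n) ℝ →
      (ExteriorAlgebra ℝ ((Fin n ⊕ Fin n) → ℝ) →ₗ[ℝ]
        ExteriorAlgebra ℝ ((Fin n ⊕ Fin n) → ℝ)))
    (hθmul : ∀ (X : Matrix (Fin n ⊕ Fin n) (Fin n ⊕ Fin n) ℝ)
      (a b : ExteriorAlgebra ℝ ((Fin n ⊕ Fin n) → ℝ)),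
      θ X (a * b) = θ X a * b + a * θ X b)
    (hθι : ∀ (X : Matrix (Fin n ⊕ Fin n) (Fin n ⊕ Fin n) ℝ) (v : (Fin n ⊕ Fin n) → ℝ),
      θ X (ExteriorAlgebra.ι ℝ v) = ExteriorAlgebra.ι ℝ (X.mulVec v)) :
    (∀ a : ExteriorAlgebra ℝ ((Fin n ⊕ Fin n) → ℝ),
      (∀ X : Matrix (Fin n ⊕ Fin n) (Fin n ⊕ Fin n) ℝ,
        X ∈ LieAlgebra.Symplectic.sp (Fin n) ℝ → θ X a = 0) ↔
      a ∈ Submodule.span ℝ (Set.range fun p : Fin (n+1) =>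
        (∑ i : Fin n, ExteriorAlgebra.ι ℝ (Pi.single (Sum.inl i) 1 : (Fin n ⊕ Fin n) → ℝ)
          * ExteriorAlgebra.ι ℝ (Pi.single (Sum.inr i) 1 : (Fin n ⊕ Fin n) → ℝ)) ^ (p : ℕ)))
    ∧ LinearIndependent ℝ (fun p : Fin (n+1) =>
        (∑ i : Fin n, ExteriorAlgebra.ι ℝ (Pi.single (Sum.inl i) 1 : (Fin n ⊕ Fin n) → ℝ)
          * ExteriorAlgebra.ι ℝ (Pi.single (Sum.inr i) 1 : (Fin n ⊕ Fin n) → ℝ)) ^ (p : ℕ)) := by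
  refine ⟨fun a => ⟨fun ha => ?_, fun ha X hX => ?_⟩, SpInv.pow_li⟩
  · refine SpInv.Der.main (δ := fun i j => θ (SpInv.Xm i j)) ⟨fun i j => hθmul _, ?_, ?_⟩ a
      (fun i j => ha _ (SpInv.Xm_mem i j))
    · intro i j k
      change θ _ (ExteriorAlgebra.ι ℝ _) = _
      rw [hθι, SpInv.Xm_inl]
      split_ifs
      · rfl
      · simp
    · intro i j k
      change θ _ (ExteriorAlgebra.ι ℝ _) = _
      rw [hθι, SpInv.Xm_inr]
      split_ifs
      · rw [map_neg]; rfl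
      · simp
  · have h0 := SpInv.om_inv (θ X) (hθmul X) X hX (hθι X)
    induction ha using Submodule.span_induction with
    | mem x hx =>
      obtain ⟨p, rfl⟩ := hx
      exact SpInv.om_pow_inv (θ X) (hθmul X) h0 p
    | zero => exact map_zero _
    | add x y _ _ hx hy => rw [map_add, hx, hy, add_zero]
    | smul r x _ hx => rw [map_smul, hx, smul_zero]
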